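/- For every integer n ≥ 0 the expected area of the random convex chain satisfies E[vol(T_n)] = 1/2 − 1/(6(n+1)) − H_{n+1}/(3(n+1)); equivalently E[V_n] = 1 − 1/(3(n+1)) − 2H_{n+1}/(3(n+1)). -/

import Mathlib

open MeasureTheory

noncomputable section

/-- The triangle with vertices (0,0), (1,0), (0,1). -/
def T : Set (ℝ × ℝ) := convexHull ℝ {(0, 0), (1, 0), (0, 1)}

/-- The uniform distribution on `T`: twice Lebesgue measure restricted to `T`. -/
def μT : Measure (ℝ × ℝ) := (2 : ENNReal) • (volume.restrict T)

/-- Joint law of `n` independent uniform points in `T`. -/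
def P (n : ℕ) : Measure (Fin n → ℝ × ℝ) := Measure.pi fun _ => μT

/-- The random convex chain: convex hull of the points together with `(1,0)` and `(0,1)`. -/
def Tchain (n : ℕ) (ω : Fin n → ℝ × ℝ) : Set (ℝ × ℝ) :=
  convexHull ℝ (Set.range ω ∪ {(1, 0), (0, 1)})

/-- Normalized area `V_n = 2 vol(T_n)`. -/
def V (n : ℕ) (ω : Fin n → ℝ × ℝ) : ℝ := 2 * (volume (Tchain n ω)).toReal

/-- Number of vertices of `T_n` other than the two corners. -/
def N (n : ℕ) (ω : Fin n → ℝ × ℝ) : ℕ :=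
  (Set.extremePoints ℝ (Tchain n ω)).ncard - 2

/-- Normalized moments `q_{n,k} = C(n+k,k) E[V_n^k]`. -/
def q (n k : ℕ) : ℝ := ((n + k).choose k : ℝ) * ∫ ω, (V n ω) ^ k ∂ P n

/-- Probability generating function of `N_n`. -/
def G (n : ℕ) (t : ℝ) : ℝ := ∫ ω, t ^ (N n ω) ∂ P n

/-- Harmonic number. -/
def H (j : ℕ) : ℝ := ∑ i ∈ Finset.range j, 1 / ((i : ℝ) + 1)

/-- Generalized harmonic number of order 2. -/
def H2 (j : ℕ) : ℝ := ∑ i ∈ Finset.range j, 1 / ((i : ℝ) + 1) ^ 2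

/-- `c(k,ℓ)`: elementary symmetric polynomial `e_k` of `2/(j(j+1))`, `j = 1,…,ℓ`. -/
def c (k l : ℕ) : ℝ :=
  ∑ S ∈ (Finset.Icc 1 l).powersetCard k, ∏ j ∈ S, 2 / ((j : ℝ) * ((j : ℝ) + 1))

/-!
A point `x` in the interior of the triangle is outside the chain exactly when some line through `x`
has all the random points and both corners strictly above it. Turning this line clockwise about `x`
until it first hits the corner `(0, 1)` or one of the random points makes it canonical, so that
`P (x ∉ T_n)` is a sum of probabilities of disjoint first-hit events. A line with intercepts `a` and
`b` cuts off a corner triangle of probability `a * b`. It is the canonical line if the random points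
that do not lie on it avoid this triangle: this has probability `(1 - a * b) ^ n` with `b = 1` if
the line was stopped by `(0, 1)`, and `(1 - a * b) ^ (n - 1)` if it was stopped by a random point.
Averaging over `x`, in the coordinates given by the two intercepts, leaves integrals over the unit
square.
-/

open Set Filter Topology
open scoped ENNReal

/-- The second coordinate of the point where the line through `p` and `z` meets the `y`-axis. -/
def yIntercept (p z : ℝ × ℝ) : ℝ := (z.2 * p.1 - p.2 * z.1) / (p.1 - z.1)

/-- The affine form vanishing on the line through `x` and `(0, b)`, positive above that line when
`0 < x.1`. -/
def lineForm (x : ℝ × ℝ) (b : ℝ) (z : ℝ × ℝ) : ℝ := x.1 * (z.2 - x.2) + (b - x.2) * (z.1 - x.1)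

/-- The open half-plane above the line through `x` and `(0, b)`, to which the open ray of that line
to the left of `x` is added if `tie` holds. -/
def upperSide (x : ℝ × ℝ) (b : ℝ) (tie : Prop) : Set (ℝ × ℝ) :=
  {z | 0 < lineForm x b z ∨ tie ∧ z.1 < x.1 ∧ lineForm x b z = 0}

/-- The point `z i` is the first one to the left of `x` hit by a line below all `z j` that is turned
clockwise about `x`; among points hit simultaneously the one of smallest index counts as first. -/
def IsFirstHit {ι : Type*} [LinearOrder ι] (x : ℝ × ℝ) (z : ι → ℝ × ℝ) (i : ι) : Prop :=
  (z i).1 < x.1 ∧ ∀ j ≠ i, z j ∈ upperSide x (yIntercept x (z i)) (i < j)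

section RotatingLine

variable {x z : ℝ × ℝ} {b : ℝ}

lemma lineForm_eq_mul (h : z.1 ≠ x.1) (b : ℝ) :
    lineForm x b z = (yIntercept x z - b) * (x.1 - z.1) := by
  have : x.1 - z.1 ≠ 0 := sub_ne_zero.2 h.symm
  simp only [lineForm, yIntercept]
  field_simp
  ring

lemma lineForm_eq_add (x z : ℝ × ℝ) (b b' : ℝ) :
    lineForm x b' z = lineForm x b z + (b' - b) * (z.1 - x.1) := by
  simp only [lineForm]
  ring

lemma lineForm_pos_iff_of_left (h : z.1 < x.1) : 0 < lineForm x b z ↔ b < yIntercept x z := by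
  rw [lineForm_eq_mul h.ne, mul_pos_iff_of_pos_right (sub_pos.2 h), sub_pos]

lemma lineForm_eq_zero_iff_of_left (h : z.1 < x.1) :
    lineForm x b z = 0 ↔ yIntercept x z = b := by
  rw [lineForm_eq_mul h.ne, mul_eq_zero_iff_right (sub_pos.2 h).ne', sub_eq_zero]

lemma mem_upperSide_iff_of_left (h : z.1 < x.1) {tie : Prop} :
    z ∈ upperSide x b tie ↔ b < yIntercept x z ∨ tie ∧ yIntercept x z = b := by
  simp only [upperSide, mem_ofPred_eq, lineForm_pos_iff_of_left h,
    lineForm_eq_zero_iff_of_left h, h, true_and]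

@[fun_prop]
lemma continuous_lineForm_left (x z : ℝ × ℝ) : Continuous fun b => lineForm x b z := by
  unfold lineForm
  fun_prop

lemma convex_setOf_lineForm_pos (x : ℝ × ℝ) (b : ℝ) : Convex ℝ {z | 0 < lineForm x b z} := by
  have hlin : IsLinearMap ℝ fun z : ℝ × ℝ => x.1 * z.2 + (b - x.2) * z.1 :=
    ⟨fun z w => by simp only [Prod.fst_add, Prod.snd_add]; ring,
      fun c z => by simp only [Prod.smul_fst, Prod.smul_snd, smul_eq_mul]; ring⟩
  have hset : {z | 0 < lineForm x b z} = {z | x.1 * b < x.1 * z.2 + (b - x.2) * z.1} := by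
    refine Set.ext fun z => ?_
    rw [mem_ofPred_eq, mem_ofPred_eq, ← sub_pos (b := x.1 * b)]
    simp only [lineForm]
    ring_nf
  rw [hset]
  exact convex_halfSpace_gt hlin (x.1 * b)

lemma eventually_lineForm_pos {tie : Prop} (hz : z ∈ upperSide x b tie) :
    ∀ᶠ b' in 𝓝[<] b, 0 < lineForm x b' z := by
  rcases hz with hpos | ⟨-, hleft, hzero⟩
  · exact nhdsWithin_le_nhds ((continuous_lineForm_left x z).continuousAt.eventually_const_lt hpos)
  · filter_upwards [self_mem_nhdsWithin] with b' hb'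
    rw [lineForm_eq_add x z b b', hzero, zero_add]
    exact mul_pos_of_neg_of_neg (sub_neg.2 hb') (sub_neg.2 hleft)

variable {ι : Type*} [LinearOrder ι] {ζ : ι → ℝ × ℝ} {i j : ι}

lemma IsFirstHit.eq (hi : IsFirstHit x ζ i) (hj : IsFirstHit x ζ j) : i = j := by
  by_contra hij
  have hi' := (mem_upperSide_iff_of_left hj.1).1 (hi.2 j (Ne.symm hij))
  have hj' := (mem_upperSide_iff_of_left hi.1).1 (hj.2 i hij)
  rcases hi' with hi' | ⟨hij, hi'⟩ <;> rcases hj' with hj' | ⟨hji, hj'⟩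
  · exact hi'.asymm hj'
  · exact hi'.ne hj'
  · exact hj'.ne hi'
  · exact hij.asymm hji

lemma IsFirstHit.eventually_lineForm_pos (hi : IsFirstHit x ζ i) (j : ι) :
    ∀ᶠ b in 𝓝[<] yIntercept x (ζ i), 0 < lineForm x b (ζ j) := by
  by_cases hij : j = i
  · subst hij
    have htie : ζ j ∈ upperSide x (yIntercept x (ζ j)) True :=
      (mem_upperSide_iff_of_left hi.1).2 (Or.inr ⟨trivial, rfl⟩)
    exact _root_.eventually_lineForm_pos htie
  · exact _root_.eventually_lineForm_pos (hi.2 j hij)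

lemma exists_isFirstHit [Finite ι] (hleft : ∃ i, (ζ i).1 < x.1)
    (hb : ∀ i, 0 < lineForm x b (ζ i)) : ∃ i, IsFirstHit x ζ i ∧ b < yIntercept x (ζ i) := by
  have hfin : {i | (ζ i).1 < x.1}.Finite := toFinite _
  obtain ⟨i, hi, hmin⟩ := exists_min_image _ (fun i => toLex (yIntercept x (ζ i), i)) hfin hleft
  have hbi : b < yIntercept x (ζ i) := (lineForm_pos_iff_of_left hi).1 (hb i)
  refine ⟨i, ⟨hi, fun j hji => ?_⟩, hbi⟩
  rcases lt_or_ge (ζ j).1 x.1 with hj | hj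
  · rw [mem_upperSide_iff_of_left hj]
    rcases Prod.Lex.toLex_le_toLex.1 (hmin j hj) with hlt | ⟨heq, hle⟩
    · exact Or.inl hlt
    · exact Or.inr ⟨lt_of_le_of_ne hle hji.symm, heq.symm⟩
  · left
    rw [lineForm_eq_add x (ζ j) b]
    exact add_pos_of_pos_of_nonneg (hb j) (mul_nonneg (sub_pos.2 hbi).le (sub_nonneg.2 hj))

theorem exists_forall_lineForm_pos_iff [Finite ι] (hleft : ∃ i, (ζ i).1 < x.1) (hz : x.1 ≤ z.1) :
    (∃ b, 0 < lineForm x b z ∧ ∀ i, 0 < lineForm x b (ζ i)) ↔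
      ∃ i, IsFirstHit x ζ i ∧ 0 < lineForm x (yIntercept x (ζ i)) z := by
  constructor
  · rintro ⟨b, hbz, hb⟩
    obtain ⟨i, hi, hbi⟩ := exists_isFirstHit hleft hb
    refine ⟨i, hi, ?_⟩
    rw [lineForm_eq_add x z b]
    exact add_pos_of_pos_of_nonneg hbz (mul_nonneg (sub_pos.2 hbi).le (sub_nonneg.2 hz))
  · rintro ⟨i, hi, hiz⟩
    have hev : ∀ᶠ b in 𝓝[<] yIntercept x (ζ i), 0 < lineForm x b z ∧ ∀ j, 0 < lineForm x b (ζ j) :=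
      (eventually_lineForm_pos (tie := True) (Or.inl hiz)).and
        (eventually_all.2 hi.eventually_lineForm_pos)
    exact hev.exists

end RotatingLine

/-- The open right triangle with legs of length `a` and `b` along the coordinate axes. -/
def cornerTriangle (a b : ℝ) : Set (ℝ × ℝ) := {z | 0 < z.1 ∧ 0 < z.2 ∧ z.1 / a + z.2 / b < 1}

lemma mem_cornerTriangle_one {x : ℝ × ℝ} :
    x ∈ cornerTriangle 1 1 ↔ 0 < x.1 ∧ 0 < x.2 ∧ x.1 + x.2 < 1 := by
  simp only [cornerTriangle, mem_ofPred_eq, div_one]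

/-- The points of the chain preceded by the corner `(0, 1)`, which a turning line can hit just like
any of them. -/
def withCorner {n : ℕ} (ω : Fin n → ℝ × ℝ) : Fin (n + 1) → ℝ × ℝ := Fin.cons (0, 1) ω

section Separation

variable {n : ℕ} {x : ℝ × ℝ}

lemma Tchain_eq_convexHull_insert (ω : Fin n → ℝ × ℝ) :
    Tchain n ω = convexHull ℝ (insert (1, 0) (range (withCorner ω))) := by
  rw [withCorner, Fin.range_cons, Tchain, union_insert, union_singleton]

lemma corner_mem_Tchain (ω : Fin n → ℝ × ℝ) : (1, 0) ∈ Tchain n ω :=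
  subset_convexHull ℝ _ (by simp)

lemma withCorner_mem_Tchain (ω : Fin n → ℝ × ℝ) (i : Fin (n + 1)) :
    withCorner ω i ∈ Tchain n ω := by
  rw [Tchain_eq_convexHull_insert]
  exact subset_convexHull ℝ _ (mem_insert_of_mem _ (mem_range_self i))

lemma isCompact_Tchain (ω : Fin n → ℝ × ℝ) : IsCompact (Tchain n ω) := by
  rw [Tchain_eq_convexHull_insert]
  exact ((finite_range _).insert _).isCompact_convexHull ℝ

theorem exists_forall_lineForm_pos_of_notMem {K : Set (ℝ × ℝ)} (hx : x ∈ cornerTriangle 1 1)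
    (hK : Convex ℝ K) (hKc : IsClosed K) (h₁ : (1, 0) ∈ K) (h₂ : (0, 1) ∈ K) (hxK : x ∉ K) :
    ∃ b, ∀ z ∈ K, 0 < lineForm x b z := by
  obtain ⟨hx₁, hx₂, hx₃⟩ := mem_cornerTriangle_one.1 hx
  obtain ⟨f, u, hfx, hfK⟩ := geometric_hahn_banach_point_closed hK hKc hxK
  set α := f (1, 0)
  set β := f (0, 1)
  have hf (z : ℝ × ℝ) : f z = z.1 * α + z.2 * β := by
    rw [← smul_eq_mul, ← smul_eq_mul, ← map_smul, ← map_smul, ← map_add]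
    simp
  -- `f` is larger at both corners than at `x`, which lies below the segment joining them.
  have hβ : 0 < β := by
    have hα' : f x < α := hfx.trans (hfK _ h₁)
    have hβ' : f x < β := hfx.trans (hfK _ h₂)
    rw [hf] at hα' hβ'
    have : 0 < (1 - x.1 - x.2) * β := by nlinarith
    exact pos_of_mul_pos_right this (by linarith)
  refine ⟨f x / β, fun z hz => ?_⟩
  have hform : lineForm x (f x / β) z = x.1 * (f z - f x) / β := by
    simp only [lineForm, hf]
    field_simp
    ring
  rw [hform]
  exact div_pos (mul_pos hx₁ (sub_pos.2 (hfx.trans (hfK z hz)))) hβ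

theorem notMem_Tchain_iff_exists_line (hx : x ∈ cornerTriangle 1 1) (ω : Fin n → ℝ × ℝ) :
    x ∉ Tchain n ω ↔
      ∃ b, 0 < lineForm x b (1, 0) ∧ ∀ i, 0 < lineForm x b (withCorner ω i) := by
  constructor
  · intro h
    obtain ⟨b, hb⟩ := exists_forall_lineForm_pos_of_notMem hx (convex_convexHull ℝ _)
      (isCompact_Tchain ω).isClosed (corner_mem_Tchain ω) (withCorner_mem_Tchain ω 0) h
    exact ⟨b, hb _ (corner_mem_Tchain ω), fun i => hb _ (withCorner_mem_Tchain ω i)⟩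
  · rintro ⟨b, hb₀, hb⟩ hmem
    rw [Tchain_eq_convexHull_insert] at hmem
    have hsub : insert (1, 0) (range (withCorner ω)) ⊆ {z | 0 < lineForm x b z} :=
      insert_subset hb₀ (range_subset_iff.2 hb)
    have hpos := convexHull_min hsub (convex_setOf_lineForm_pos x b) hmem
    simp [lineForm] at hpos

theorem notMem_Tchain_iff_exists_isFirstHit (hx : x ∈ cornerTriangle 1 1) (ω : Fin n → ℝ × ℝ) :
    x ∉ Tchain n ω ↔ ∃ i, IsFirstHit x (withCorner ω) i ∧
      0 < lineForm x (yIntercept x (withCorner ω i)) (1, 0) := by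
  obtain ⟨hx₁, hx₂, hx₃⟩ := mem_cornerTriangle_one.1 hx
  rw [notMem_Tchain_iff_exists_line hx]
  exact exists_forall_lineForm_pos_iff ⟨0, hx₁⟩ (by linarith)

end Separation

section TriangleIntegral

lemma lintegral_Ioo_ofReal {f : ℝ → ℝ} {a b : ℝ} (hab : a ≤ b) (hf : Continuous f)
    (hpos : ∀ x ∈ Ioo a b, 0 ≤ f x) :
    ∫⁻ x in Ioo a b, ENNReal.ofReal (f x) = ENNReal.ofReal (∫ x in a..b, f x) := by
  rw [intervalIntegral.integral_of_le hab, integral_Ioc_eq_integral_Ioo,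
    ofReal_integral_eq_lintegral_ofReal (hf.integrableOn_Icc.mono_set Ioo_subset_Icc_self)
      ((ae_restrict_iff' measurableSet_Ioo).2 (Eventually.of_forall hpos))]

lemma lintegral_Ioo_one_sub_div_pow {a : ℝ} (ha : 0 < a) (k : ℕ) :
    ∫⁻ u in Ioo 0 a, ENNReal.ofReal (1 - u / a) ^ k = ENNReal.ofReal (a / (k + 1)) := by
  have hnonneg (u : ℝ) (hu : u ∈ Ioo 0 a) : 0 ≤ 1 - u / a :=
    sub_nonneg.2 ((div_le_one ha).2 hu.2.le)
  rw [setLIntegral_congr_fun measurableSet_Ioo fun u hu =>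
      (ENNReal.ofReal_pow (hnonneg u hu) k).symm,
    lintegral_Ioo_ofReal ha.le (by fun_prop) fun u hu => pow_nonneg (hnonneg u hu) k,
    intervalIntegral.integral_comp_sub_div (fun t : ℝ => t ^ k) ha.ne' 1, integral_pow]
  simp [ha.ne', div_eq_mul_inv]

lemma lintegral_comp_mul_sub {F : ℝ → ℝ≥0∞} (hF : Measurable F) {k : ℝ} (hk : 0 < k) (d : ℝ) :
    ∫⁻ y, F (k * (y - d)) = ENNReal.ofReal k⁻¹ * ∫⁻ b, F b := by
  rw [lintegral_sub_right_eq_self (fun y => F (k * y)) d,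
    ← lintegral_map hF (measurable_const_mul k), Real.map_volume_mul_left hk.ne',
    lintegral_smul_measure, abs_of_pos (inv_pos.2 hk), smul_eq_mul]

lemma measurable_yIntercept (p : ℝ × ℝ) : Measurable (yIntercept p) := by
  unfold yIntercept
  fun_prop

lemma lintegral_comp_yIntercept {p : ℝ × ℝ} {u : ℝ} (hp : 0 < p.1) (hu : u < p.1)
    {F : ℝ → ℝ≥0∞} (hF : Measurable F) :
    ∫⁻ v, F (yIntercept p (u, v)) = ENNReal.ofReal (1 - u / p.1) * ∫⁻ b, F b := by
  have hpu : 0 < p.1 - u := sub_pos.2 hu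
  have hy (v : ℝ) : yIntercept p (u, v) = p.1 / (p.1 - u) * (v - p.2 * u / p.1) := by
    simp only [yIntercept]
    field_simp
  have hk : (p.1 / (p.1 - u))⁻¹ = 1 - u / p.1 := by field_simp
  simp only [hy]
  rw [lintegral_comp_mul_sub hF (div_pos hp hpu), hk]

/-- The open triangle with apex `p` whose base consists of the points of the `y`-axis with second
coordinate in `s`, for an interval `s`. -/
def apexTriangle (p : ℝ × ℝ) (s : Set ℝ) : Set (ℝ × ℝ) :=
  {z | z.1 ∈ Ioo 0 p.1 ∧ yIntercept p z ∈ s}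

lemma measurableSet_apexTriangle (p : ℝ × ℝ) {s : Set ℝ} (hs : MeasurableSet s) :
    MeasurableSet (apexTriangle p s) :=
  (measurable_fst measurableSet_Ioo).inter (measurable_yIntercept p hs)

theorem lintegral_apexTriangle {p : ℝ × ℝ} (hp : 0 < p.1) {s : Set ℝ} (hs : MeasurableSet s)
    {F : ℝ → ℝ≥0∞} (hF : Measurable F) (k : ℕ) :
    ∫⁻ z in apexTriangle p s, ENNReal.ofReal (1 - z.1 / p.1) ^ k * F (yIntercept p z) =
      ENNReal.ofReal (p.1 / (k + 2)) * ∫⁻ b in s, F b := by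
  have hind (z : ℝ × ℝ) : (apexTriangle p s).indicator
      (fun z => ENNReal.ofReal (1 - z.1 / p.1) ^ k * F (yIntercept p z)) z =
      (Ioo 0 p.1).indicator (fun u => ENNReal.ofReal (1 - u / p.1) ^ k) z.1 *
        s.indicator F (yIntercept p z) := by
    by_cases hu : z.1 ∈ Ioo 0 p.1
    · by_cases hz : yIntercept p z ∈ s
      · have hmem : z ∈ apexTriangle p s := ⟨hu, hz⟩
        rw [indicator_of_mem hu, indicator_of_mem hz, indicator_of_mem hmem]
      · rw [indicator_of_notMem hz, indicator_of_notMem fun h : z ∈ _ => hz h.2, mul_zero]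
    · rw [indicator_of_notMem hu, indicator_of_notMem fun h : z ∈ _ => hu h.1, zero_mul]
  have hm : Measurable fun z : ℝ × ℝ =>
      (Ioo 0 p.1).indicator (fun u => ENNReal.ofReal (1 - u / p.1) ^ k) z.1 *
        s.indicator F (yIntercept p z) :=
    ((Measurable.indicator (by fun_prop) measurableSet_Ioo).comp measurable_fst).mul
      ((hF.indicator hs).comp (measurable_yIntercept p))
  have hslice (u : ℝ) : ∫⁻ v, (Ioo 0 p.1).indicator (fun u => ENNReal.ofReal (1 - u / p.1) ^ k) u *
        s.indicator F (yIntercept p (u, v)) =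
      (Ioo 0 p.1).indicator (fun u => ENNReal.ofReal (1 - u / p.1) ^ (k + 1)) u *
        ∫⁻ b in s, F b := by
    by_cases hu : u ∈ Ioo 0 p.1
    · have hFm : Measurable fun v => s.indicator F (yIntercept p (u, v)) :=
        (hF.indicator hs).comp ((measurable_yIntercept p).comp measurable_prodMk_left)
      rw [lintegral_const_mul _ hFm,
        lintegral_comp_yIntercept hp hu.2 (hF.indicator hs), lintegral_indicator hs,
        indicator_of_mem hu, indicator_of_mem hu, ← mul_assoc, ← pow_succ]
    · simp only [indicator_of_notMem hu, zero_mul, lintegral_zero]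
  rw [← lintegral_indicator (measurableSet_apexTriangle p hs), lintegral_congr hind,
    Measure.volume_eq_prod, lintegral_prod _ hm.aemeasurable, lintegral_congr hslice,
    lintegral_mul_const _ (Measurable.indicator (by fun_prop) measurableSet_Ioo),
    lintegral_indicator measurableSet_Ioo, lintegral_Ioo_one_sub_div_pow hp]
  push_cast
  ring_nf

/-- The first coordinate of the point where the line through `(0, b)` and `z` meets the `x`-axis. -/
def xIntercept (b : ℝ) (z : ℝ × ℝ) : ℝ := b * z.1 / (b - z.2)

lemma cornerTriangle_eq_swap_preimage {a b : ℝ} (ha : 0 < a) (hb : 0 < b) :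
    cornerTriangle a b = Prod.swap ⁻¹' apexTriangle (b, 0) (Ioo 0 a) := by
  ext z
  simp only [cornerTriangle, apexTriangle, yIntercept, mem_ofPred_eq, mem_preimage, mem_Ioo,
    Prod.fst_swap, Prod.snd_swap, zero_mul, sub_zero]
  constructor
  · rintro ⟨h₁, h₂, h₃⟩
    have h₁' : 0 < z.1 / a := by positivity
    have h₂' : z.2 < b := (div_lt_one hb).1 (by linarith)
    have h₄ : 0 < b - z.2 := sub_pos.2 h₂'
    refine ⟨⟨h₂, h₂'⟩, by positivity, ?_⟩
    rw [div_lt_iff₀ h₄]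
    field_simp at h₃
    linarith
  · rintro ⟨⟨h₂, h₂'⟩, h₁, h₃⟩
    have h₄ : 0 < b - z.2 := sub_pos.2 h₂'
    refine ⟨pos_of_mul_pos_left ((div_pos_iff_of_pos_right h₄).1 h₁) hb.le, h₂, ?_⟩
    rw [div_lt_iff₀ h₄] at h₃
    field_simp
    linarith

theorem lintegral_cornerTriangle {a b : ℝ} (ha : 0 < a) (hb : 0 < b)
    {F : ℝ → ℝ≥0∞} (hF : Measurable F) (k : ℕ) :
    ∫⁻ z in cornerTriangle a b, ENNReal.ofReal (1 - z.2 / b) ^ k * F (xIntercept b z) =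
      ENNReal.ofReal (b / (k + 2)) * ∫⁻ c in Ioo 0 a, F c := by
  have hswap : MeasurePreserving (Prod.swap : ℝ × ℝ → ℝ × ℝ) := Measure.measurePreserving_swap
  rw [← lintegral_apexTriangle (p := (b, 0)) hb measurableSet_Ioo hF k,
    ← hswap.setLIntegral_comp_preimage_emb MeasurableEquiv.prodComm.measurableEmbedding _
      (apexTriangle (b, 0) (Ioo 0 a)), ← cornerTriangle_eq_swap_preimage ha hb]
  simp only [xIntercept, yIntercept, Prod.fst_swap, Prod.snd_swap, zero_mul, sub_zero, mul_comm b]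

lemma measurableSet_cornerTriangle (a b : ℝ) : MeasurableSet (cornerTriangle a b) :=
  (measurableSet_lt measurable_const measurable_fst).inter
    ((measurableSet_lt measurable_const measurable_snd).inter
      (measurableSet_lt (by fun_prop : Measurable fun z : ℝ × ℝ => z.1 / a + z.2 / b)
        measurable_const))

lemma volume_cornerTriangle {a b : ℝ} (ha : 0 < a) (hb : 0 < b) :
    volume (cornerTriangle a b) = ENNReal.ofReal (a * b / 2) := by
  have h := lintegral_cornerTriangle ha hb (measurable_const (a := 1)) 0
  simp only [pow_zero, one_mul, setLIntegral_one, Real.volume_Ioo, sub_zero, CharP.cast_eq_zero,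
    zero_add] at h
  rw [h, ← ENNReal.ofReal_mul (by positivity)]
  ring_nf

end TriangleIntegral

section UniformMeasure

lemma T_eq_setOf : T = {z : ℝ × ℝ | 0 ≤ z.1 ∧ 0 ≤ z.2 ∧ z.1 + z.2 ≤ 1} := by
  refine Subset.antisymm (convexHull_min ?_ ?_) fun z ⟨h₁, h₂, h₃⟩ => ?_
  · simp [insert_subset_iff]
  · exact (convex_halfSpace_ge (LinearMap.fst ℝ ℝ ℝ).isLinear 0).inter
      ((convex_halfSpace_ge (LinearMap.snd ℝ ℝ ℝ).isLinear 0).inter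
        (convex_halfSpace_le (LinearMap.fst ℝ ℝ ℝ + LinearMap.snd ℝ ℝ ℝ).isLinear 1))
  · have hv : ∀ i, ![((0, 0) : ℝ × ℝ), (1, 0), (0, 1)] i ∈ T := fun i =>
      subset_convexHull ℝ _ (by fin_cases i <;> simp)
    have hw : ∀ i, 0 ≤ ![1 - z.1 - z.2, z.1, z.2] i := fun i => by
      fin_cases i
      exacts [by simpa using by linarith, h₁, h₂]
    have hmem := (convex_convexHull ℝ _).sum_mem (t := Finset.univ) (fun i _ => hw i)
      (by simp [Fin.sum_univ_three]; ring) fun i _ => hv i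
    simpa [T, Fin.sum_univ_three] using hmem

lemma ae_linear_ne {α β : ℝ} (h : α ≠ 0 ∨ β ≠ 0) (γ : ℝ) :
    ∀ᵐ z : ℝ × ℝ, α * z.1 + β * z.2 ≠ γ := by
  let L : ℝ × ℝ →ₗ[ℝ] ℝ := α • LinearMap.fst ℝ ℝ ℝ + β • LinearMap.snd ℝ ℝ ℝ
  have hL : Function.Surjective L := by
    intro r
    rcases h with h | h
    · exact ⟨(r / α, 0), by simp [L, mul_div_cancel₀ r h]⟩
    · exact ⟨(0, r / β), by simp [L, mul_div_cancel₀ r h]⟩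
  exact (ae_comp_linearMap_mem_iff L volume volume hL (measurableSet_singleton γ).compl).2
    (Measure.ae_ne volume γ)

lemma cornerTriangle_one_subset_T : cornerTriangle 1 1 ⊆ T := fun z hz => by
  rw [mem_cornerTriangle_one] at hz
  rw [T_eq_setOf]
  exact ⟨hz.1.le, hz.2.1.le, hz.2.2.le⟩

lemma T_ae_eq_cornerTriangle : T =ᵐ[volume] cornerTriangle 1 1 := by
  filter_upwards [ae_linear_ne (α := 1) (β := 0) (by simp) 0,
    ae_linear_ne (α := 0) (β := 1) (by simp) 0, ae_linear_ne (α := 1) (β := 1) (by simp) 1]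
    with z h₁ h₂ h₃
  refine propext ⟨fun hz => ?_, fun hz => cornerTriangle_one_subset_T hz⟩
  have hz' : z ∈ {z : ℝ × ℝ | 0 ≤ z.1 ∧ 0 ≤ z.2 ∧ z.1 + z.2 ≤ 1} := T_eq_setOf ▸ hz
  simp only [one_mul, zero_mul, add_zero, zero_add] at h₁ h₂ h₃
  exact mem_cornerTriangle_one.2
    ⟨hz'.1.lt_of_ne' h₁, hz'.2.1.lt_of_ne' h₂, hz'.2.2.lt_of_ne h₃⟩

lemma μT_eq_restrict_cornerTriangle : μT = (2 : ℝ≥0∞) • volume.restrict (cornerTriangle 1 1) := by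
  rw [μT, Measure.restrict_congr_set T_ae_eq_cornerTriangle]

lemma ae_mem_cornerTriangle : ∀ᵐ z ∂μT, z ∈ cornerTriangle 1 1 := by
  rw [μT_eq_restrict_cornerTriangle]
  exact Measure.ae_smul_measure (ae_restrict_mem (measurableSet_cornerTriangle 1 1)) 2

lemma μT_apply_of_subset {A : Set (ℝ × ℝ)} (hA : A ⊆ T) : μT A = 2 * volume A := by
  rw [μT, Measure.smul_apply, Measure.restrict_eq_self volume hA, smul_eq_mul]

instance : IsProbabilityMeasure μT where
  measure_univ := by
    rw [μT_eq_restrict_cornerTriangle, Measure.smul_apply, Measure.restrict_apply_univ,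
      volume_cornerTriangle one_pos one_pos, smul_eq_mul, ← ENNReal.ofReal_ofNat,
      ← ENNReal.ofReal_mul zero_le_two]
    norm_num

instance (n : ℕ) : IsProbabilityMeasure (P n) :=
  inferInstanceAs (IsProbabilityMeasure (Measure.pi fun _ => μT))

lemma μT_cornerTriangle {a b : ℝ} (ha : 0 < a) (ha₁ : a ≤ 1) (hb : 0 < b) (hb₁ : b ≤ 1) :
    μT (cornerTriangle a b) = ENNReal.ofReal (a * b) := by
  have hsub : cornerTriangle a b ⊆ cornerTriangle 1 1 := fun z ⟨h₁, h₂, h₃⟩ => by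
    have ha' : z.1 ≤ z.1 / a := le_div_self h₁.le ha ha₁
    have hb' : z.2 ≤ z.2 / b := le_div_self h₂.le hb hb₁
    exact mem_cornerTriangle_one.2 ⟨h₁, h₂, by linarith⟩
  rw [μT_apply_of_subset (hsub.trans cornerTriangle_one_subset_T), volume_cornerTriangle ha hb,
    ← ENNReal.ofReal_ofNat, ← ENNReal.ofReal_mul zero_le_two, mul_div_cancel₀ _ two_ne_zero]

variable {x : ℝ × ℝ} {b : ℝ}

lemma lineForm_eq_mul_intercepts (hx : x.1 ≠ 0) (hb : b ≠ 0) (hbx : b ≠ x.2) (z : ℝ × ℝ) :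
    lineForm x b z = b * x.1 * (z.1 / xIntercept b x + z.2 / b - 1) := by
  have : b - x.2 ≠ 0 := sub_ne_zero.2 hbx
  simp only [lineForm, xIntercept]
  field_simp
  ring

lemma lineForm_corner (x : ℝ × ℝ) (b : ℝ) : lineForm x b (1, 0) = b * (1 - x.1) - x.2 := by
  simp only [lineForm]
  ring

lemma ae_lineForm_ne_zero (hx : x.1 ≠ 0) (b : ℝ) : ∀ᵐ z, lineForm x b z ≠ 0 := by
  filter_upwards [ae_linear_ne (α := b - x.2) (Or.inr hx) (x.1 * b)] with z hz
  refine fun h => hz ?_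
  simp only [lineForm] at h
  linarith

lemma xIntercept_mem_Ioo (hx : x ∈ cornerTriangle 1 1) (hxb : 0 < lineForm x b (1, 0)) :
    x.2 < b ∧ xIntercept b x ∈ Ioo 0 1 := by
  obtain ⟨hx₁, hx₂, hx₃⟩ := mem_cornerTriangle_one.1 hx
  rw [lineForm_corner] at hxb
  have hb : 0 < b := pos_of_mul_pos_left (hx₂.trans (sub_pos.1 hxb)) (by linarith)
  have hbx : 0 < b - x.2 := by nlinarith
  exact ⟨sub_pos.1 hbx, div_pos (mul_pos hb hx₁) hbx, (div_lt_one hbx).2 (by linarith)⟩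

theorem μT_upperSide (hx : x ∈ cornerTriangle 1 1) (hb : b ≤ 1) (hxb : 0 < lineForm x b (1, 0))
    (tie : Prop) : μT (upperSide x b tie) = ENNReal.ofReal (1 - xIntercept b x * b) := by
  obtain ⟨hx₁, hx₂, -⟩ := mem_cornerTriangle_one.1 hx
  obtain ⟨hxb', ha⟩ := xIntercept_mem_Ioo hx hxb
  have hb₀ : 0 < b := hx₂.trans hxb'
  have hbelow : ((upperSide x b tie)ᶜ : Set (ℝ × ℝ)) =ᵐ[μT] cornerTriangle (xIntercept b x) b := by
    have hne : ∀ᵐ z ∂μT, lineForm x b z ≠ 0 :=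
      Measure.ae_smul_measure (ae_restrict_of_ae (ae_lineForm_ne_zero hx₁.ne' b)) 2
    filter_upwards [ae_mem_cornerTriangle, hne] with z hz hz₀
    have hneg : z ∉ upperSide x b tie ↔ lineForm x b z < 0 := by
      simp [upperSide, hz₀, hz₀.le_iff_lt]
    refine propext (hneg.trans ?_)
    rw [lineForm_eq_mul_intercepts hx₁.ne' hb₀.ne' hxb'.ne',
      ← not_iff_not, not_lt, mul_nonneg_iff_of_pos_left (mul_pos hb₀ hx₁), ← not_lt, not_iff_not,
      sub_neg]
    exact ⟨fun h => ⟨hz.1, hz.2.1, h⟩, fun h => h.2.2⟩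
  have hcompl : NullMeasurableSet (upperSide x b tie)ᶜ μT :=
    (measurableSet_cornerTriangle _ _).nullMeasurableSet.congr hbelow.symm
  rw [← compl_compl (upperSide x b tie), prob_compl_eq_one_sub₀ hcompl, measure_congr hbelow,
    μT_cornerTriangle ha.1 ha.2.le hb₀ hb, ENNReal.ofReal_sub _ (mul_pos ha.1 hb₀).le,
    ENNReal.ofReal_one]

end UniformMeasure

section FirstHitProbability

theorem pi_setOf_mem_and_forall_mem {E : Type*} [MeasurableSpace E] (ν : Measure E)
    [SigmaFinite ν] {m : ℕ} (k : Fin (m + 1)) {A : Set E} (hA : MeasurableSet A)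
    {S : Fin (m + 1) → E → Set E} (hS : ∀ j, MeasurableSet {p : E × E | p.2 ∈ S j p.1}) :
    Measure.pi (fun _ => ν) {ω | ω k ∈ A ∧ ∀ j ≠ k, ω j ∈ S j (ω k)} =
      ∫⁻ y in A, ∏ j, ν (S (k.succAbove j) y) ∂ν := by
  set B : Set (E × (Fin m → E)) := {p | p.1 ∈ A ∧ ∀ j, p.2 j ∈ S (k.succAbove j) p.1}
  have hB : MeasurableSet B := by
    refine (measurable_fst hA).inter (measurableSet_setOfPred.2 (Measurable.forall fun j => ?_))
    have hpair : Measurable fun p : E × (Fin m → E) => (p.1, p.2 j) := by fun_prop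
    exact measurableSet_setOfPred.1 (hpair (hS (k.succAbove j)))
  have hpre : {ω | ω k ∈ A ∧ ∀ j ≠ k, ω j ∈ S j (ω k)} =
      MeasurableEquiv.piFinSuccAbove (fun _ => E) k ⁻¹' B := by
    ext ω
    refine and_congr Iff.rfl ⟨fun h j => h _ (Fin.succAbove_ne k j), fun h j hj => ?_⟩
    obtain ⟨i, rfl⟩ := Fin.exists_succAbove_eq hj
    exact h i
  have hslice (y : E) : Measure.pi (fun _ => ν) (Prod.mk y ⁻¹' B) =
      A.indicator (fun y => ∏ j, ν (S (k.succAbove j) y)) y := by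
    by_cases hy : y ∈ A
    · have hpi : Prod.mk y ⁻¹' B = univ.pi fun j => S (k.succAbove j) y := by
        ext ω
        simp [B, hy]
      rw [hpi, Measure.pi_pi, indicator_of_mem hy]
    · have hempty : Prod.mk y ⁻¹' B = ∅ := by
        ext ω
        simp [B, hy]
      rw [hempty, measure_empty, indicator_of_notMem hy]
  rw [hpre, (measurePreserving_piFinSuccAbove (fun _ => ν) k).measure_preimage
    hB.nullMeasurableSet, Measure.prod_apply hB, lintegral_congr hslice, lintegral_indicator hA]

lemma measurableSet_setOf_mem_upperSide {α : Type*} [MeasurableSpace α] (x : ℝ × ℝ) {f : α → ℝ}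
    (hf : Measurable f) {g : α → ℝ × ℝ} (hg : Measurable g) (tie : Prop) :
    MeasurableSet {a | g a ∈ upperSide x (f a) tie} := by
  have hform : Measurable fun a => lineForm x (f a) (g a) := by
    unfold lineForm
    fun_prop
  exact (measurableSet_lt measurable_const hform).union ((MeasurableSet.const tie).inter
    ((measurableSet_lt hg.fst measurable_const).inter
      (measurableSet_eq_fun hform measurable_const)))

variable {n : ℕ} {x : ℝ × ℝ}

/-- The event that the line turned about `x` first hits the `i`-th of the points `(0, 1), ω 0, …`
while it still passes below the corner `(1, 0)`. -/
def firstHitEvent (n : ℕ) (x : ℝ × ℝ) (i : Fin (n + 1)) : Set (Fin n → ℝ × ℝ) :=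
  {ω | IsFirstHit x (withCorner ω) i ∧ 0 < lineForm x (yIntercept x (withCorner ω i)) (1, 0)}

lemma measurable_withCorner (i : Fin (n + 1)) :
    Measurable fun ω : Fin n → ℝ × ℝ => withCorner ω i := by
  refine Fin.cases ?_ (fun k => ?_) i
  · exact measurable_const
  · exact measurable_pi_apply k

lemma measurableSet_firstHitEvent (x : ℝ × ℝ) (i : Fin (n + 1)) :
    MeasurableSet (firstHitEvent n x i) := by
  have hy : Measurable fun ω : Fin n → ℝ × ℝ => yIntercept x (withCorner ω i) :=
    (measurable_yIntercept x).comp (measurable_withCorner i)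
  refine MeasurableSet.inter (MeasurableSet.inter ?_ ?_) ?_
  · exact measurableSet_lt (measurable_withCorner i).fst measurable_const
  · exact measurableSet_setOfPred.2 (Measurable.forall fun j => Measurable.forall fun _ =>
      measurableSet_setOfPred.1
        (measurableSet_setOf_mem_upperSide x hy (measurable_withCorner j) (i < j)))
  · simp only [lineForm_corner]
    exact measurableSet_lt measurable_const ((hy.mul_const _).sub_const _)

lemma yIntercept_corner (hx : x.1 ≠ 0) : yIntercept x (0, 1) = 1 := by
  simp [yIntercept, hx]

lemma firstHitEvent_zero (hx : x ∈ cornerTriangle 1 1) :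
    firstHitEvent n x 0 = univ.pi fun _ => upperSide x 1 True := by
  obtain ⟨hx₁, -, hx₃⟩ := mem_cornerTriangle_one.1 hx
  have hcorner : 0 < lineForm x 1 (1, 0) := by
    rw [lineForm_corner]
    linarith
  ext ω
  simp [firstHitEvent, IsFirstHit, withCorner, Fin.forall_fin_succ, yIntercept_corner hx₁.ne',
    hcorner, hx₁]

lemma P_firstHitEvent_zero (hx : x ∈ cornerTriangle 1 1) :
    P n (firstHitEvent n x 0) = ENNReal.ofReal (1 - xIntercept 1 x) ^ n := by
  have hcorner : 0 < lineForm x 1 (1, 0) := by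
    rw [lineForm_corner]
    linarith [(mem_cornerTriangle_one.1 hx).2.2]
  rw [firstHitEvent_zero hx, P, Measure.pi_pi, μT_upperSide hx le_rfl hcorner, mul_one,
    Finset.prod_const, Finset.card_fin]

lemma lineForm_corner_pos_iff (hx : x.1 < 1) {b : ℝ} :
    0 < lineForm x b (1, 0) ↔ x.2 / (1 - x.1) < b := by
  rw [lineForm_corner, sub_pos, div_lt_iff₀ (sub_pos.2 hx)]

lemma firstHitEvent_succ (hx : x ∈ cornerTriangle 1 1) (k : Fin n) :
    firstHitEvent n x k.succ = {ω |
      ω k ∈ {z | z.1 < x.1 ∧ yIntercept x z ∈ Ioo (x.2 / (1 - x.1)) 1} ∧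
        ∀ j ≠ k, ω j ∈ upperSide x (yIntercept x (ω k)) (k < j)} := by
  obtain ⟨hx₁, hx₂, hx₃⟩ := mem_cornerTriangle_one.1 hx
  have hcorner (b : ℝ) : (0, 1) ∈ upperSide x b False ↔ b < 1 := by
    rw [mem_upperSide_iff_of_left hx₁, yIntercept_corner hx₁.ne', false_and, or_false]
  ext ω
  simp only [firstHitEvent, IsFirstHit, withCorner, Fin.forall_fin_succ, mem_ofPred_eq,
    Fin.cons_zero, Fin.cons_succ, lineForm_corner_pos_iff (show x.1 < 1 by linarith), ne_eq,
    Fin.succ_inj, Fin.succ_lt_succ_iff, Fin.not_lt_zero, hcorner, (Fin.succ_ne_zero k).symm,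
    not_false_eq_true, true_imp_iff, mem_Ioo]
  tauto

lemma cornerTriangle_inter_eq_apexTriangle (hx : x ∈ cornerTriangle 1 1) {s : Set ℝ}
    (hs : s ⊆ Ioo 0 1) :
    cornerTriangle 1 1 ∩ {z | z.1 < x.1 ∧ yIntercept x z ∈ s} = apexTriangle x s := by
  obtain ⟨hx₁, hx₂, hx₃⟩ := mem_cornerTriangle_one.1 hx
  ext z
  refine ⟨fun ⟨hz, hzx, hzs⟩ => ⟨⟨(mem_cornerTriangle_one.1 hz).1, hzx⟩, hzs⟩,
    fun ⟨⟨hz₁, hzx⟩, hzs⟩ => ⟨mem_cornerTriangle_one.2 ?_, hzx, hzs⟩⟩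
  have hline : z.2 * x.1 = yIntercept x z * (x.1 - z.1) + x.2 * z.1 := by
    rw [yIntercept, div_mul_cancel₀ _ (sub_pos.2 hzx).ne']
    ring
  have hlow : 0 < yIntercept x z * (x.1 - z.1) := mul_pos (hs hzs).1 (sub_pos.2 hzx)
  have hup : yIntercept x z * (x.1 - z.1) < x.1 - z.1 :=
    mul_lt_of_lt_one_left (sub_pos.2 hzx) (hs hzs).2
  exact ⟨hz₁, by nlinarith, by nlinarith⟩

theorem setLIntegral_μT_comp_yIntercept (hx : x ∈ cornerTriangle 1 1) {s : Set ℝ}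
    (hs : MeasurableSet s) (hs₁ : s ⊆ Ioo 0 1) {F : ℝ → ℝ≥0∞} (hF : Measurable F) :
    ∫⁻ z in {z | z.1 < x.1 ∧ yIntercept x z ∈ s}, F (yIntercept x z) ∂μT =
      ENNReal.ofReal x.1 * ∫⁻ b in s, F b := by
  have hmeas : MeasurableSet {z | z.1 < x.1 ∧ yIntercept x z ∈ s} :=
    (measurableSet_lt measurable_fst measurable_const).inter (measurable_yIntercept x hs)
  have hcone := lintegral_apexTriangle hx.1 hs hF 0
  simp only [pow_zero, one_mul, CharP.cast_eq_zero, zero_add] at hcone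
  rw [μT_eq_restrict_cornerTriangle, Measure.restrict_smul, lintegral_smul_measure,
    Measure.restrict_restrict hmeas, inter_comm, cornerTriangle_inter_eq_apexTriangle hx hs₁,
    hcone, smul_eq_mul, ← mul_assoc, ← ENNReal.ofReal_ofNat, ← ENNReal.ofReal_mul zero_le_two,
    mul_div_cancel₀ _ two_ne_zero]

theorem P_firstHitEvent_succ {m : ℕ} (hx : x ∈ cornerTriangle 1 1) (k : Fin (m + 1)) :
    P (m + 1) (firstHitEvent (m + 1) x k.succ) = ENNReal.ofReal x.1 *
      ∫⁻ b in Ioo (x.2 / (1 - x.1)) 1, ENNReal.ofReal (1 - xIntercept b x * b) ^ m := by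
  obtain ⟨-, hx₂, hx₃⟩ := mem_cornerTriangle_one.1 hx
  have hx₄ : x.1 < 1 := by linarith
  set A := {z : ℝ × ℝ | z.1 < x.1 ∧ yIntercept x z ∈ Ioo (x.2 / (1 - x.1)) 1}
  have hA : MeasurableSet A :=
    (measurableSet_lt measurable_fst measurable_const).inter
      (measurable_yIntercept x measurableSet_Ioo)
  have hevent : firstHitEvent (m + 1) x k.succ =
      {ω | ω k ∈ A ∧ ∀ j ≠ k, ω j ∈ upperSide x (yIntercept x (ω k)) (k < j)} :=
    firstHitEvent_succ hx k
  have hprod : ∀ z ∈ A, ∏ j, μT (upperSide x (yIntercept x z) (k < k.succAbove j)) =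
      ENNReal.ofReal (1 - xIntercept (yIntercept x z) x * yIntercept x z) ^ m := by
    intro z hz
    have hpos := (lineForm_corner_pos_iff hx₄).2 hz.2.1
    simp only [μT_upperSide hx hz.2.2.le hpos, Finset.prod_const, Finset.card_fin]
  have hF : Measurable fun b => ENNReal.ofReal (1 - xIntercept b x * b) ^ m := by
    unfold xIntercept
    fun_prop
  rw [hevent, P, pi_setOf_mem_and_forall_mem μT k hA
      (S := fun j z => upperSide x (yIntercept x z) (k < j)) fun j =>
      measurableSet_setOf_mem_upperSide x ((measurable_yIntercept x).comp measurable_fst)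
        measurable_snd (k < j), setLIntegral_congr_fun hA hprod]
  exact setLIntegral_μT_comp_yIntercept hx measurableSet_Ioo
    (Ioo_subset_Ioo_left (div_pos hx₂ (sub_pos.2 hx₄)).le) hF

theorem P_setOf_notMem_Tchain (hx : x ∈ cornerTriangle 1 1) (n : ℕ) :
    P n {ω | x ∉ Tchain n ω} = ENNReal.ofReal (1 - xIntercept 1 x) ^ n +
      n * (ENNReal.ofReal x.1 * ∫⁻ b in Ioo (x.2 / (1 - x.1)) 1,
        ENNReal.ofReal (1 - xIntercept b x * b) ^ (n - 1)) := by
  have hunion : {ω | x ∉ Tchain n ω} = ⋃ i, firstHitEvent n x i := by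
    ext ω
    rw [mem_ofPred_eq, notMem_Tchain_iff_exists_isFirstHit hx, mem_iUnion]
    rfl
  have hdisj : Pairwise (Function.onFun Disjoint (firstHitEvent n x)) := fun i j hij =>
    disjoint_left.2 fun ω hi hj => hij (hi.1.eq hj.1)
  rw [hunion, measure_iUnion hdisj (measurableSet_firstHitEvent x), tsum_fintype,
    Fin.sum_univ_succ, P_firstHitEvent_zero hx]
  cases n with
  | zero => simp
  | succ m => simp only [P_firstHitEvent_succ hx, Finset.sum_const, Finset.card_fin, nsmul_eq_mul,
      Nat.add_sub_cancel]

end FirstHitProbability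

section AveragingOverTriangle

lemma lintegral_μT (F : ℝ × ℝ → ℝ≥0∞) :
    ∫⁻ x, F x ∂μT = 2 * ∫⁻ x in cornerTriangle 1 1, F x := by
  rw [μT_eq_restrict_cornerTriangle, lintegral_smul_measure, smul_eq_mul]

lemma lintegral_μT_one_sub_xIntercept_pow (n : ℕ) :
    ∫⁻ x, ENNReal.ofReal (1 - xIntercept 1 x) ^ n ∂μT = ENNReal.ofReal (1 / (n + 1)) := by
  have hF : Measurable fun a : ℝ => ENNReal.ofReal (1 - a) ^ n := by fun_prop
  have htriangle := lintegral_cornerTriangle one_pos one_pos hF 0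
  have hpow := lintegral_Ioo_one_sub_div_pow one_pos n
  simp only [pow_zero, one_mul, CharP.cast_eq_zero, zero_add] at htriangle
  simp only [div_one] at hpow
  rw [lintegral_μT, htriangle, hpow, ← mul_assoc, ← ENNReal.ofReal_ofNat,
    ← ENNReal.ofReal_mul zero_le_two, mul_one_div_cancel two_ne_zero, ENNReal.ofReal_one, one_mul]

lemma mem_cornerTriangle_and_mem_Ioo_iff {x : ℝ × ℝ} {b : ℝ} :
    x ∈ cornerTriangle 1 1 ∧ b ∈ Ioo (x.2 / (1 - x.1)) 1 ↔
      b ∈ Ioo 0 1 ∧ x ∈ cornerTriangle 1 b := by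
  have hbase (hb : 0 < b) : x.1 / 1 + x.2 / b < 1 ↔ x.2 < b * (1 - x.1) := by
    rw [div_one, ← lt_sub_iff_add_lt', div_lt_iff₀ hb, mul_comm]
  rw [mem_cornerTriangle_one]
  constructor
  · rintro ⟨⟨hx₁, hx₂, hx₃⟩, hb, hb₁⟩
    have hx₄ : 0 < 1 - x.1 := by linarith
    have hb₀ : 0 < b := (div_pos hx₂ hx₄).trans hb
    exact ⟨⟨hb₀, hb₁⟩, hx₁, hx₂, (hbase hb₀).2 ((div_lt_iff₀ hx₄).1 hb)⟩
  · rintro ⟨⟨hb₀, hb₁⟩, hx₁, hx₂, hx₃⟩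
    have hx₄ : x.2 < b * (1 - x.1) := (hbase hb₀).1 hx₃
    have hx₅ : 0 < 1 - x.1 := pos_of_mul_pos_right (hx₂.trans hx₄) hb₀.le
    exact ⟨⟨hx₁, hx₂, by nlinarith⟩, (div_lt_iff₀ hx₅).2 hx₄, hb₁⟩

theorem setLIntegral_setLIntegral_swap {α β : Type*} [MeasurableSpace α] [MeasurableSpace β]
    {μ : Measure α} {ν : Measure β} [SFinite μ] [SFinite ν] {A : Set α} {I : α → Set β}
    {B : Set β} {J : β → Set α} (hA : MeasurableSet A) (hB : MeasurableSet B)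
    (hD : MeasurableSet {p : α × β | p.1 ∈ A ∧ p.2 ∈ I p.1})
    (hAB : ∀ x y, x ∈ A ∧ y ∈ I x ↔ y ∈ B ∧ x ∈ J y) {F : α → β → ℝ≥0∞}
    (hF : Measurable (Function.uncurry F)) :
    ∫⁻ x in A, ∫⁻ y in I x, F x y ∂ν ∂μ = ∫⁻ y in B, ∫⁻ x in J y, F x y ∂μ ∂ν := by
  set D := {p : α × β | p.1 ∈ A ∧ p.2 ∈ I p.1}
  have hmem (x : α) (y : β) : (x, y) ∈ D ↔ y ∈ B ∧ x ∈ J y := hAB x y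
  have hleft (x : α) : ∫⁻ y, D.indicator (Function.uncurry F) (x, y) ∂ν =
      A.indicator (fun x => ∫⁻ y in I x, F x y ∂ν) x := by
    by_cases hx : x ∈ A
    · have hI : Prod.mk x ⁻¹' D = I x := by ext y; simp [D, hx]
      rw [indicator_of_mem hx, ← hI, ← lintegral_indicator (measurable_prodMk_left hD)]
      rfl
    · simp [D, hx]
  have hright (y : β) : ∫⁻ x, D.indicator (Function.uncurry F) (x, y) ∂μ =
      B.indicator (fun y => ∫⁻ x in J y, F x y ∂μ) y := by
    by_cases hy : y ∈ B
    · have hJ : (fun x => (x, y)) ⁻¹' D = J y := by ext x; simp [hmem, hy]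
      rw [indicator_of_mem hy, ← hJ, ← lintegral_indicator (measurable_prodMk_right hD)]
      rfl
    · simp [hmem, hy]
  rw [← lintegral_indicator hA, ← lintegral_congr hleft,
    lintegral_lintegral_swap (f := fun x y => D.indicator (Function.uncurry F) (x, y))
      (hF.indicator hD).aemeasurable, lintegral_congr hright, lintegral_indicator hB]

lemma lintegral_cornerTriangle_lintegral_Ioo {F : ℝ × ℝ → ℝ → ℝ≥0∞}
    (hF : Measurable (Function.uncurry F)) :
    ∫⁻ x in cornerTriangle 1 1, ∫⁻ b in Ioo (x.2 / (1 - x.1)) 1, F x b =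
      ∫⁻ b in Ioo 0 1, ∫⁻ x in cornerTriangle 1 b, F x b := by
  have hslope : Measurable fun p : (ℝ × ℝ) × ℝ => p.1.2 / (1 - p.1.1) := by fun_prop
  have hD : MeasurableSet {p : (ℝ × ℝ) × ℝ |
      p.1 ∈ cornerTriangle 1 1 ∧ p.2 ∈ Ioo (p.1.2 / (1 - p.1.1)) 1} :=
    (measurable_fst (measurableSet_cornerTriangle 1 1)).inter
      ((measurableSet_lt hslope measurable_snd).inter
        (measurableSet_lt measurable_snd measurable_const))
  exact setLIntegral_setLIntegral_swap (measurableSet_cornerTriangle 1 1) measurableSet_Ioo hD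
    (fun _ _ => mem_cornerTriangle_and_mem_Ioo_iff) hF

lemma lintegral_cornerTriangle_fst_mul {b : ℝ} (hb : 0 < b) {F : ℝ → ℝ≥0∞} (hF : Measurable F) :
    ∫⁻ x in cornerTriangle 1 b, ENNReal.ofReal x.1 * F (xIntercept b x) =
      ENNReal.ofReal (b / 3) * ∫⁻ a in Ioo 0 1, ENNReal.ofReal a * F a := by
  have hfst : ∀ x ∈ cornerTriangle 1 b, ENNReal.ofReal x.1 * F (xIntercept b x) =
      ENNReal.ofReal (1 - x.2 / b) ^ 1 *
        (ENNReal.ofReal (xIntercept b x) * F (xIntercept b x)) := by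
    rintro x ⟨hx₁, -, hx₃⟩
    have hx₂ : x.2 / b < 1 := by linarith [div_one x.1]
    have hbx : b - x.2 ≠ 0 := (sub_pos.2 ((div_lt_one hb).1 hx₂)).ne'
    have hmul : x.1 = (1 - x.2 / b) * xIntercept b x := by
      rw [xIntercept]
      field_simp
    rw [pow_one, ← mul_assoc, ← ENNReal.ofReal_mul (sub_pos.2 hx₂).le, ← hmul]
  have hF' : Measurable fun a => ENNReal.ofReal a * F a := by fun_prop
  rw [setLIntegral_congr_fun (measurableSet_cornerTriangle 1 b) hfst,
    lintegral_cornerTriangle one_pos hb hF' 1]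
  norm_num

lemma integral_one_sub_mul_pow (b : ℝ) (m : ℕ) :
    ∫ a in (0)..1, (1 - a * b) ^ m = (∑ k ∈ Finset.range (m + 1), (1 - b) ^ k) / (m + 1) := by
  rcases eq_or_ne b 0 with rfl | hb
  · simp [div_self (Nat.cast_add_one_ne_zero (R := ℝ) m)]
  · have hgeom := mul_neg_geom_sum (1 - b) (m + 1)
    rw [sub_sub_cancel] at hgeom
    simp only [mul_comm _ b]
    rw [intervalIntegral.integral_comp_sub_mul (fun t => t ^ m) hb 1, integral_pow, mul_one,
      mul_zero, sub_zero, one_pow, ← hgeom, smul_eq_mul, mul_div_assoc, inv_mul_cancel_left₀ hb]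

lemma integral_sum_one_sub_pow (m : ℕ) :
    ∫ b in (0)..1, ∑ k ∈ Finset.range m, (1 - b) ^ k = H m := by
  rw [intervalIntegral.integral_finsetSum fun k _ =>
    (by fun_prop : Continuous fun b : ℝ => (1 - b) ^ k).intervalIntegrable 0 1]
  refine Finset.sum_congr rfl fun k _ => ?_
  rw [intervalIntegral.integral_comp_sub_left (fun t => t ^ k), integral_pow]
  simp

lemma mul_integral_mul_one_sub_mul_pow (b : ℝ) (m : ℕ) :
    b * ∫ a in (0)..1, a * (1 - a * b) ^ m =
      (∑ k ∈ Finset.range (m + 1), (1 - b) ^ k) / (m + 1) -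
        (∑ k ∈ Finset.range (m + 2), (1 - b) ^ k) / (m + 2) := by
  have hint (j : ℕ) : IntervalIntegrable (fun a : ℝ => (1 - a * b) ^ j) volume 0 1 :=
    (by fun_prop : Continuous fun a : ℝ => (1 - a * b) ^ j).intervalIntegrable 0 1
  have hsucc := integral_one_sub_mul_pow b (m + 1)
  rw [Nat.cast_succ, add_assoc (m : ℝ), one_add_one_eq_two] at hsucc
  rw [← integral_one_sub_mul_pow, ← hsucc, ← intervalIntegral.integral_sub (hint m) (hint (m + 1)),
    ← intervalIntegral.integral_const_mul]
  refine intervalIntegral.integral_congr fun a _ => ?_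
  ring

theorem lintegral_unitSquare_mul_one_sub_mul_pow (m : ℕ) :
    ∫⁻ b in Ioo 0 1, ENNReal.ofReal b *
        ∫⁻ a in Ioo 0 1, ENNReal.ofReal a * ENNReal.ofReal (1 - a * b) ^ m =
      ENNReal.ofReal (H (m + 1) / (m + 1) - H (m + 2) / (m + 2)) := by
  set S : ℝ → ℝ := fun b => (∑ k ∈ Finset.range (m + 1), (1 - b) ^ k) / (m + 1) -
    (∑ k ∈ Finset.range (m + 2), (1 - b) ^ k) / (m + 2)
  have hnonneg {a b : ℝ} (ha : a ∈ Icc 0 1) (hb : b ∈ Ioo 0 1) : 0 ≤ a * (1 - a * b) ^ m :=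
    mul_nonneg ha.1 (pow_nonneg (sub_nonneg.2 (mul_le_one₀ ha.2 hb.1.le hb.2.le)) m)
  have hS : ∀ b ∈ Ioo (0 : ℝ) 1, ENNReal.ofReal b *
      (∫⁻ a in Ioo 0 1, ENNReal.ofReal a * ENNReal.ofReal (1 - a * b) ^ m) =
        ENNReal.ofReal (S b) := by
    intro b hb
    have hofReal : ∀ a ∈ Ioo (0 : ℝ) 1, ENNReal.ofReal a * ENNReal.ofReal (1 - a * b) ^ m =
        ENNReal.ofReal (a * (1 - a * b) ^ m) := fun a ha => by
      rw [ENNReal.ofReal_mul ha.1.le, ENNReal.ofReal_pow]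
      exact sub_nonneg.2 (mul_le_one₀ ha.2.le hb.1.le hb.2.le)
    rw [setLIntegral_congr_fun measurableSet_Ioo hofReal, lintegral_Ioo_ofReal zero_le_one
      (by fun_prop) fun a ha => hnonneg (Ioo_subset_Icc_self ha) hb,
      ← ENNReal.ofReal_mul hb.1.le, mul_integral_mul_one_sub_mul_pow]
  have hSnonneg : ∀ b ∈ Ioo (0 : ℝ) 1, 0 ≤ S b := by
    intro b hb
    rw [show S b = _ from (mul_integral_mul_one_sub_mul_pow b m).symm]
    exact mul_nonneg hb.1.le
      (intervalIntegral.integral_nonneg zero_le_one fun a ha => hnonneg ha hb)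
  have hint (j : ℕ) : IntervalIntegrable (fun b : ℝ => ∑ k ∈ Finset.range j, (1 - b) ^ k)
      volume 0 1 :=
    (by fun_prop : Continuous fun b : ℝ => ∑ k ∈ Finset.range j, (1 - b) ^ k).intervalIntegrable 0 1
  rw [setLIntegral_congr_fun measurableSet_Ioo hS,
    lintegral_Ioo_ofReal zero_le_one (by fun_prop) hSnonneg,
    intervalIntegral.integral_sub ((hint _).div_const _) ((hint _).div_const _),
    intervalIntegral.integral_div, intervalIntegral.integral_div, integral_sum_one_sub_pow,
    integral_sum_one_sub_pow]

lemma lintegral_μT_fst_mul_lintegral_Ioo (m : ℕ) :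
    ∫⁻ x, ENNReal.ofReal x.1 * (∫⁻ b in Ioo (x.2 / (1 - x.1)) 1,
        ENNReal.ofReal (1 - xIntercept b x * b) ^ m) ∂μT =
      ENNReal.ofReal (2 / 3 * (H (m + 1) / (m + 1) - H (m + 2) / (m + 2))) := by
  have hF : Measurable (Function.uncurry fun (x : ℝ × ℝ) (b : ℝ) =>
      ENNReal.ofReal x.1 * ENNReal.ofReal (1 - xIntercept b x * b) ^ m) := by
    unfold Function.uncurry xIntercept
    fun_prop
  have hslice : ∀ b ∈ Ioo (0 : ℝ) 1, ∫⁻ x in cornerTriangle 1 b,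
      ENNReal.ofReal x.1 * ENNReal.ofReal (1 - xIntercept b x * b) ^ m =
        ENNReal.ofReal 3⁻¹ * (ENNReal.ofReal b *
          ∫⁻ a in Ioo 0 1, ENNReal.ofReal a * ENNReal.ofReal (1 - a * b) ^ m) := by
    intro b hb
    rw [lintegral_cornerTriangle_fst_mul hb.1
      (by fun_prop : Measurable fun a : ℝ => ENNReal.ofReal (1 - a * b) ^ m), ← mul_assoc,
      ← ENNReal.ofReal_mul (by norm_num), div_eq_inv_mul]
  simp only [← lintegral_const_mul' _ _ ENNReal.ofReal_ne_top]
  rw [lintegral_μT, lintegral_cornerTriangle_lintegral_Ioo hF,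
    setLIntegral_congr_fun measurableSet_Ioo hslice,
    lintegral_const_mul' _ _ ENNReal.ofReal_ne_top, lintegral_unitSquare_mul_one_sub_mul_pow,
    ← ENNReal.ofReal_ofNat, ← mul_assoc, ← ENNReal.ofReal_mul zero_le_two,
    ← ENNReal.ofReal_mul (by norm_num), div_eq_mul_inv (2 : ℝ)]

lemma H_succ (n : ℕ) : H (n + 1) = H n + 1 / (n + 1) :=
  Finset.sum_range_succ _ n

lemma one_le_H_succ (n : ℕ) : 1 ≤ H (n + 1) := by
  have h := Finset.single_le_sum (f := fun i : ℕ => 1 / ((i : ℝ) + 1))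
    (fun i _ => by positivity) (Finset.mem_range.2 n.succ_pos)
  simpa [H] using h

theorem lintegral_P_setOf_notMem_Tchain (n : ℕ) :
    ∫⁻ x, P n {ω | x ∉ Tchain n ω} ∂μT =
      ENNReal.ofReal (1 / (3 * (n + 1)) + 2 * H (n + 1) / (3 * (n + 1))) := by
  have hmeas : Measurable fun x : ℝ × ℝ => ENNReal.ofReal (1 - xIntercept 1 x) ^ n := by
    unfold xIntercept
    fun_prop
  rw [lintegral_congr_ae (ae_mem_cornerTriangle.mono fun x hx => P_setOf_notMem_Tchain hx n),
    lintegral_add_left hmeas, lintegral_μT_one_sub_xIntercept_pow,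
    lintegral_const_mul' _ _ (ENNReal.natCast_ne_top n)]
  cases n with
  | zero => norm_num [H]
  | succ m =>
    have hcoeff : ((m : ℝ) + 1) * (2 / 3 * (H (m + 1) / (m + 1) - H (m + 2) / (m + 2))) =
        2 / (3 * (m + 2)) * (H (m + 1) - 1) + 2 / (3 * (m + 2) ^ 2) := by
      rw [H_succ (m + 1)]
      push_cast
      field_simp
      ring
    rw [Nat.add_sub_cancel, lintegral_μT_fst_mul_lintegral_Ioo, ← ENNReal.ofReal_natCast,
      ← ENNReal.ofReal_mul (Nat.cast_nonneg _), Nat.cast_succ, hcoeff, ← ENNReal.ofReal_add]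
    · rw [H_succ (m + 1)]
      congr 1
      push_cast
      field_simp
      ring
    · positivity
    · have := sub_nonneg.2 (one_le_H_succ m)
      positivity

end AveragingOverTriangle

section ExpectedArea

theorem isClosed_setOf_mem_convexHull_range {ι E : Type*} [Finite ι] [AddCommGroup E] [Module ℝ E]
    [TopologicalSpace E] [ContinuousAdd E] [ContinuousSMul ℝ E] [T2Space E] :
    IsClosed {p : (ι → E) × E | p.2 ∈ convexHull ℝ (range p.1)} := by
  classical
  cases nonempty_fintype ι
  have hcomb (v : ι → E) :
      convexHull ℝ (range v) = Fintype.linearCombination ℝ v '' stdSimplex ℝ ι := by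
    rw [← convexHull_rangle_single_eq_stdSimplex, LinearMap.image_convexHull, ← range_comp]
    refine congrArg _ (congrArg _ (funext fun i => ?_))
    simp [Fintype.linearCombination_apply_single]
  have hgraph : IsClosed {r : stdSimplex ℝ ι × (ι → E) × E | ∑ i, r.1.1 i • r.2.1 i = r.2.2} :=
    isClosed_eq (continuous_finsetSum _ fun i _ =>
      ((continuous_apply i).comp (continuous_subtype_val.comp continuous_fst)).smul
        (by fun_prop)) (by fun_prop)
  convert isClosedMap_snd_of_compactSpace _ hgraph
  ext p
  simp [hcomb, Fintype.linearCombination_apply]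

variable {n : ℕ}

lemma measurableSet_setOf_mem_Tchain :
    MeasurableSet {p : (Fin n → ℝ × ℝ) × ℝ × ℝ | p.2 ∈ Tchain n p.1} := by
  have hvert : Measurable fun p : (Fin n → ℝ × ℝ) × ℝ × ℝ =>
      ((Fin.cons (1, 0) (withCorner p.1) : Fin (n + 2) → ℝ × ℝ), p.2) := by
    refine (measurable_pi_lambda _ fun i => Fin.cases ?_ (fun j => ?_) i).prodMk measurable_snd
    · exact measurable_const
    · exact (measurable_withCorner j).comp measurable_fst
  simp only [Tchain_eq_convexHull_insert, ← Fin.range_cons]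
  exact hvert isClosed_setOf_mem_convexHull_range.measurableSet

lemma Tchain_subset_T {ω : Fin n → ℝ × ℝ} (hω : ∀ i, ω i ∈ T) : Tchain n ω ⊆ T := by
  refine convexHull_min (union_subset (range_subset_iff.2 hω) ?_) (convex_convexHull ℝ _)
  exact (subset_insert _ _).trans (subset_convexHull ℝ _)

lemma ae_forall_mem_T (n : ℕ) : ∀ᵐ ω ∂P n, ∀ i, ω i ∈ T :=
  ae_all_iff.2 fun i => (measurePreserving_eval (fun _ => μT) i).quasiMeasurePreserving.ae
    (ae_mem_cornerTriangle.mono fun _ hz => cornerTriangle_one_subset_T hz)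

lemma V_eq_one_sub {ω : Fin n → ℝ × ℝ} (hω : ∀ i, ω i ∈ T) :
    V n ω = 1 - μT.real {x | x ∉ Tchain n ω} := by
  have hreal : V n ω = μT.real (Tchain n ω) := by
    rw [measureReal_def, μT_apply_of_subset (Tchain_subset_T hω), ENNReal.toReal_mul]
    rfl
  rw [hreal, ← compl_def, probReal_compl_eq_one_sub (isCompact_Tchain ω).measurableSet,
    sub_sub_cancel]

theorem integral_V (n : ℕ) :
    ∫ ω, V n ω ∂P n = 1 - 1 / (3 * ((n : ℝ) + 1)) - 2 * H (n + 1) / (3 * ((n : ℝ) + 1)) := by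
  have hout : MeasurableSet {p : (Fin n → ℝ × ℝ) × ℝ × ℝ | p.2 ∉ Tchain n p.1} :=
    measurableSet_setOf_mem_Tchain.compl
  have hmeas : Measurable fun ω => μT {x | x ∉ Tchain n ω} := measurable_measure_prodMk_left hout
  have hint : Integrable (fun ω => μT.real {x | x ∉ Tchain n ω}) (P n) :=
    Integrable.of_bound hmeas.ennreal_toReal.aestronglyMeasurable 1
      (Eventually.of_forall fun ω => (Real.norm_of_nonneg measureReal_nonneg).trans_le
        measureReal_le_one)
  have hfubini : ∫⁻ ω, μT {x | x ∉ Tchain n ω} ∂P n = ∫⁻ x, P n {ω | x ∉ Tchain n ω} ∂μT :=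
    (Measure.prod_apply hout).symm.trans (Measure.prod_apply_symm hout)
  have hmean : ∫ ω, μT.real {x | x ∉ Tchain n ω} ∂P n =
      1 / (3 * (n + 1)) + 2 * H (n + 1) / (3 * (n + 1)) := by
    have := zero_le_one.trans (one_le_H_succ n)
    simp only [measureReal_def]
    rw [integral_toReal hmeas.aemeasurable (Eventually.of_forall fun ω => measure_lt_top _ _),
      hfubini, lintegral_P_setOf_notMem_Tchain, ENNReal.toReal_ofReal (by positivity)]
  rw [integral_congr_ae ((ae_forall_mem_T n).mono fun ω hω => V_eq_one_sub hω),
    integral_sub (integrable_const _) hint, hmean, integral_const, probReal_univ, one_smul,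
    sub_sub]

end ExpectedArea

/-- `E[vol(T_n)] = 1/2 - 1/(6(n+1)) - H_{n+1}/(3(n+1))`; equivalently
`E[V_n] = 1 - 1/(3(n+1)) - 2 H_{n+1}/(3(n+1))`. -/
theorem stmt13 (n : ℕ) :
    (∫ ω, (volume (Tchain n ω)).toReal ∂ P n
        = 1 / 2 - 1 / (6 * ((n : ℝ) + 1)) - H (n + 1) / (3 * ((n : ℝ) + 1))) ∧
    (∫ ω, V n ω ∂ P n
        = 1 - 1 / (3 * ((n : ℝ) + 1)) - 2 * H (n + 1) / (3 * ((n : ℝ) + 1))) := by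
  refine ⟨?_, integral_V n⟩
  have hdouble : ∫ ω, V n ω ∂P n = 2 * ∫ ω, (volume (Tchain n ω)).toReal ∂P n :=
    integral_const_mul 2 _
  rw [integral_V] at hdouble
  rw [← mul_right_inj' (two_ne_zero' ℝ), ← hdouble]
  field_simp
  ring

end
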